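/- Fix i ∈ {0,1,2,3,4}. Let f = (f_0, …, f_4) be a holomorphic solution of the A_4^(1) system with parameters α on an open set U ⊂ ℂ with f_i nonvanishing on U. Define g_j = f_j + (α_i/f_i) u_{ij} where u_{i,i+1} = 1, u_{i,i−1} = −1 and u_{ij} = 0 otherwise (indices mod 5), and define β_j = α_j − α_i a_{ij} where a_{ii} = 2, a_{i,i±1} = −1 and a_{ij} = 0 otherwise. Then g = (g_0, …, g_4) is a holomorphic solution of the A_4^(1) system with parameters β on U. -/

import Mathlib

/-!
Put `c = αᵢ / fᵢ` and `Pⱼ = fⱼ₊₁ - fⱼ₊₂ + fⱼ₊₃ - fⱼ₊₄`. Then `fᵢ' = fᵢ (Pᵢ + c)`, so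
`c' = -c (Pᵢ + c)`. Replacing `f` by `g` changes `Pᵢ` to `Pᵢ + 2c`, `Pᵢ₊₁` to `Pᵢ₊₁ - c`,
`Pᵢ₋₁` to `Pᵢ₋₁ - c`, and leaves the other two `Pⱼ` unchanged.
The claim is then algebraic: it follows from `c fᵢ = αᵢ` and
`Pⱼ + Pⱼ₊₁ = fⱼ₊₁ - fⱼ` (for `j = i` and `j = i - 1`).
-/

/-- The orientation matrix of type `A₄⁽¹⁾`: `u_{i,i+1} = 1`, `u_{i,i-1} = −1`,
`u_{ij} = 0` otherwise (indices mod 5). -/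
def orientA4 (i j : Fin 5) : ℂ :=
  if j = i + 1 then 1 else if j = i - 1 then -1 else 0

/-- The generalized Cartan matrix of type `A₄⁽¹⁾`: `a_{ii} = 2`,
`a_{i,i±1} = −1`, `a_{ij} = 0` otherwise (indices mod 5). -/
def cartanA4 (i j : Fin 5) : ℂ :=
  if j = i then 2 else if j = i + 1 ∨ j = i - 1 then -1 else 0

/-- The Bäcklund transformation `sᵢ` maps holomorphic solutions of the
`A₄⁽¹⁾` system with parameters `α` (with `fᵢ` nonvanishing) to holomorphic
solutions with parameters `β`, `βⱼ = αⱼ − αᵢ a_{ij}`. -/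
theorem backlund_si_A4 (α : Fin 5 → ℂ) (i : Fin 5) (U : Set ℂ) (hU : IsOpen U)
    (f : Fin 5 → ℂ → ℂ)
    (hf : ∀ j : Fin 5, ∀ t ∈ U,
      HasDerivAt (f j)
        (f j t * (f (j + 1) t - f (j + 2) t + f (j + 3) t - f (j + 4) t) + α j) t)
    (hfi : ∀ t ∈ U, f i t ≠ 0)
    (g : Fin 5 → ℂ → ℂ)
    (hg : ∀ j : Fin 5, ∀ t ∈ U, g j t = f j t + α i / f i t * orientA4 i j)
    (β : Fin 5 → ℂ)
    (hβ : ∀ j : Fin 5, β j = α j - α i * cartanA4 i j) :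
    ∀ j : Fin 5, ∀ t ∈ U,
      HasDerivAt (g j)
        (g j t * (g (j + 1) t - g (j + 2) t + g (j + 3) t - g (j + 4) t) + β j) t := by
  intro j t ht
  have hne := hfi t ht
  have hder : HasDerivAt (fun s => f j s + α i / f i s * orientA4 i j) _ t :=
    (hf j t ht).add
      (((hasDerivAt_const t (α i)).div (hf i t ht) hne).mul_const (orientA4 i j))
  -- The formula for `g` holds only on `U`; since `U` is open this is enough near `t`.
  have heq : g j =ᶠ[nhds t] fun s => f j s + α i / f i s * orientA4 i j :=
    Filter.eventually_of_mem (hU.mem_nhds ht) (hg j)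
  refine (hder.congr_of_eventuallyEq heq).congr_deriv ?_
  simp only [hg _ t ht, hβ]
  clear hder heq hg hβ hf hfi
  fin_cases i <;> fin_cases j <;>
    simp [orientA4, cartanA4, Fin.ext_iff, -mul_eq_mul_left_iff] at hne ⊢ <;>
    first | ring1 | (field_simp; ring1)
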